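/- arXiv:0806.4326 — 9 statements merged into one kernel-verified Lean document; each statement's English description precedes it below -/
import Mathlib

section
/- Let ℛ be a finite family of closed unit disks in ℝ² and let K = ⋂_{D∈ℛ} D be their intersection. Then for every disk D ∈ ℛ, the set frontier(K) ∩ frontier(D) is preconnected (i.e. it is empty or connected); that is, each disk contributes at most one arc (edge) to the boundary of the unit-disk polygon K. -/
noncomputable section

/-- The plane ℝ². -/
abbrev E2 := EuclideanSpace ℝ (Fin 2)

lemma aux_key (c e u : E2) (hu : ‖u‖ = 1) :
    c + u ∈ Metric.closedBall e 1 ↔ ‖e - c‖ ^ 2 / 2 ≤ inner ℝ (e - c) u := by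
  have h1 : c + u - e = u - (e - c) := by abel
  have h2 := norm_sub_sq_real u (e - c)
  rw [mem_closedBall_iff_norm, h1, ← sq_le_one_iff₀ (norm_nonneg _), h2, hu,
    real_inner_comm]
  constructor <;> intro h <;> linarith

theorem stmt2 (R : Set (Set E2)) (hfin : R.Finite)
    (hR : ∀ D ∈ R, ∃ c : E2, D = Metric.closedBall c 1) :
    ∀ D ∈ R, IsPreconnected (frontier (⋂₀ R) ∩ frontier D) := by
  intro D hD
  obtain ⟨c, rfl⟩ := hR D hD
  have hcl : IsClosed (⋂₀ R) := isClosed_sInter fun t ht => by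
    obtain ⟨e, rfl⟩ := hR t ht
    exact Metric.isClosed_closedBall
  have hset : frontier (⋂₀ R) ∩ frontier (Metric.closedBall c 1)
      = ⋂₀ R ∩ Metric.sphere c 1 := by
    have hf : frontier (Metric.closedBall c 1) = Metric.sphere c 1 :=
      frontier_closedBall c one_ne_zero
    ext x
    constructor
    · rintro ⟨h1, h2⟩
      exact ⟨hcl.frontier_subset h1, hf ▸ h2⟩
    · rintro ⟨h1, h2⟩
      rw [← hf] at h2
      refine ⟨?_, h2⟩
      rw [hcl.frontier_eq]
      exact ⟨h1, fun h => h2.2 (interior_mono (Set.sInter_subset_of_mem hD) h)⟩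
  rw [hset]
  by_cases hex : ∃ e : E2, e ≠ c ∧ Metric.closedBall e 1 ∈ R
  · obtain ⟨e, hec, heR⟩ := hex
    let T : Set E2 := Metric.closedBall 0 1 ∩
      {y | ∀ d : E2, Metric.closedBall d 1 ∈ R → ‖d - c‖ ^ 2 / 2 ≤ inner ℝ (d - c) y}
    have hTc : Convex ℝ T := by
      refine (convex_closedBall _ _).inter ?_
      intro x hx y hy a b ha hb hab d hd
      rw [inner_add_right, inner_smul_right, inner_smul_right]
      have h1 := mul_le_mul_of_nonneg_left (hx d hd) ha
      have h2 := mul_le_mul_of_nonneg_left (hy d hd) hb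
      have : ‖d - c‖ ^ 2 / 2 = a * (‖d - c‖ ^ 2 / 2) + b * (‖d - c‖ ^ 2 / 2) := by
        rw [← add_mul, hab, one_mul]
      linarith
    have hT0 : ∀ y ∈ T, ‖y‖ ≠ 0 := by
      intro y hy h0
      have h := hy.2 e heR
      rw [norm_eq_zero.1 h0, inner_zero_right] at h
      have : 0 < ‖e - c‖ := norm_pos_iff.2 (sub_ne_zero.2 hec)
      nlinarith
    have himg : ⋂₀ R ∩ Metric.sphere c 1 = (fun y : E2 => c + ‖y‖⁻¹ • y) '' T := by
      ext x
      constructor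
      · rintro ⟨h1, h2⟩
        have hn : ‖x - c‖ = 1 := by simpa [dist_eq_norm] using h2
        refine ⟨x - c, ⟨by simp [hn], ?_⟩, by simp [hn]⟩
        intro d hd
        rw [← aux_key c d _ hn]
        simpa using h1 _ hd
      · rintro ⟨y, hy, rfl⟩
        have hy0 := hT0 y hy
        have hn : ‖‖y‖⁻¹ • y‖ = 1 := by
          rw [norm_smul, norm_inv, norm_norm, inv_mul_cancel₀ hy0]
        refine ⟨?_, by simpa [dist_eq_norm] using hn⟩
        intro t ht
        obtain ⟨d, rfl⟩ := hR t ht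
        rw [aux_key c d _ hn, inner_smul_right]
        have h := hy.2 d ht
        have hle : ‖y‖ ≤ 1 := by simpa using hy.1
        have h1 : 1 ≤ ‖y‖⁻¹ := (one_le_inv₀ (lt_of_le_of_ne (norm_nonneg _) hy0.symm)).2 hle
        have h0 : 0 ≤ ‖d - c‖ ^ 2 / 2 := by positivity
        nlinarith
    rw [himg]
    refine hTc.isPreconnected.image _ ?_
    exact continuousOn_const.add ((continuousOn_id.norm.inv₀ hT0).smul continuousOn_id)
  · push Not at hex
    have : ⋂₀ R ∩ Metric.sphere c 1 = Metric.sphere c 1 := by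
      refine Set.inter_eq_right.2 fun x hx t ht => ?_
      obtain ⟨d, rfl⟩ := hR t ht
      by_cases hdc : d = c
      · subst hdc
        exact Metric.sphere_subset_closedBall hx
      · exact absurd ht (hex d hdc)
    rw [this]
    refine isPreconnected_sphere ?_ c 1
    rw [← Module.finrank_eq_rank]
    simp
end
end

section
/- Let ℛ be a finite family of closed unit disks in ℝ², let K = ⋂_{D∈ℛ} D, and let C be the circle of radius 1 centered at a point c ∈ ℝ² that is distinct from the center of every disk in ℛ. Then frontier(K) ∩ C contains at most 2 points; that is, a unit circle intersects the boundary of a unit-disk polygon in at most two points. -/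
noncomputable section

theorem aux_pos (a b c d u v p1 p2 q1 q2 s1 s2 : ℝ)
    (hu : 0 < u) (hx : 0 ≤ a) (hz : 0 ≤ b)
    (hp : p1^2+p2^2=1) (hq : q1^2+q2^2=1) (hs : s1^2+s2^2=1)
    (hpq : ¬ (p1 = q1 ∧ p2 = q2)) (hsq : ¬ (s1 = q1 ∧ s2 = q2))
    (h1 : a*p1 + b*s1 = c*q1) (h2 : a*p2+b*s2 = c*q2)
    (hdq : q1*d+q2*v = u) (hdp : u ≤ p1*d+p2*v) (hds : u ≤ s1*d+s2*v) :
    a = 0 ∧ b = 0 := by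
  have e1 : c * u = a*(p1*d+p2*v) + b*(s1*d+s2*v) := by
    rw [← hdq]; linear_combination (-d)*h1 - v*h2
  have e2 : (a+b)*u ≤ c*u := by
    rw [e1]; nlinarith [mul_le_mul_of_nonneg_left hdp hx, mul_le_mul_of_nonneg_left hds hz]
  have e3 : a+b ≤ c := le_of_mul_le_mul_right e2 hu
  have e4 : c = a*(p1*q1+p2*q2) + b*(s1*q1+s2*q2) := by
    linear_combination (-c)*hq - q1*h1 - q2*h2
  have key : ∀ x y : ℝ, x^2+y^2=1 → ¬ (x = q1 ∧ y = q2) → 0 < 1-(x*q1+y*q2) := by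
    intro x y h hn
    by_contra hh
    apply hn
    have : (x-q1)^2 + (y-q2)^2 ≤ 0 := by nlinarith
    constructor <;> nlinarith [sq_nonneg (x-q1), sq_nonneg (y-q2)]
  have k1 := key _ _ hp hpq
  have k2 := key _ _ hs hsq
  have m1 := mul_nonneg hx k1.le
  have m2 := mul_nonneg hz k2.le
  have z1 : a * (1-(p1*q1+p2*q2)) = 0 := by linarith
  have z2 : b * (1-(s1*q1+s2*q2)) = 0 := by linarith
  exact ⟨(mul_eq_zero.1 z1).resolve_right k1.ne', (mul_eq_zero.1 z2).resolve_right k2.ne'⟩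

theorem aux_core (d v p1 p2 q1 q2 s1 s2 : ℝ)
    (hu : 0 < q1*d+q2*v)
    (hp : p1^2+p2^2=1) (hq : q1^2+q2^2=1) (hs : s1^2+s2^2=1)
    (hpq : ¬ (p1 = q1 ∧ p2 = q2)) (hsq : ¬ (s1 = q1 ∧ s2 = q2))
    (hdp : q1*d+q2*v ≤ p1*d+p2*v) (hds : q1*d+q2*v ≤ s1*d+s2*v)
    (hdet : 0 ≤ (q1*s2-q2*s1)*(p1*q2-p2*q1)) : False := by
  have hz : p1*q2-p2*q1 = 0 := by
    rcases mul_nonneg_iff.1 hdet with ⟨h1, h2⟩ | ⟨h1, h2⟩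
    · exact (aux_pos _ _ (p1*s2-p2*s1) d _ v p1 p2 q1 q2 s1 s2 hu h1 h2 hp hq hs hpq hsq
        (by ring) (by ring) rfl hdp hds).2
    · have := (aux_pos (-(q1*s2-q2*s1)) (-(p1*q2-p2*q1)) (-(p1*s2-p2*s1)) d _ v p1 p2 q1 q2 s1 s2 hu (by linarith) (by linarith) hp hq hs hpq hsq
        (by ring) (by ring) rfl hdp hds).2
      linarith
  have a1 : p1 = (p1*q1+p2*q2)*q1 := by linear_combination (-p1)*hq + q2*hz
  have a2 : p2 = (p1*q1+p2*q2)*q2 := by linear_combination (-p2)*hq - q1*hz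
  set t := p1*q1+p2*q2 with ht
  have t2 : t^2 = 1 := by
    rw [a1, a2] at hp; linear_combination hp - t^2*hq
  rcases (sq_eq_sq_iff_eq_or_eq_neg.1 (t2.trans (one_pow 2).symm)) with h | h
  · rw [h] at a1 a2; exact hpq ⟨by linarith, by linarith⟩
  · rw [h] at a1 a2; rw [a1, a2] at hdp; linarith

theorem aux_sign (A B C : ℝ) (h1 : A * B < 0) (h2 : C * A < 0) (h3 : B * C < 0) : False := by
  have h12 := mul_pos_of_neg_of_neg h1 h2
  have h := mul_neg_of_pos_of_neg h12 h3
  have e : A * B * (C * A) * (B * C) = (A * B * C) ^ 2 := by ring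
  rw [e] at h
  exact absurd h (not_lt.2 (sq_nonneg _))

theorem stmt3 (R : Set (Set E2)) (hfin : R.Finite)
    (hR : ∀ D ∈ R, ∃ c : E2, D = Metric.closedBall c 1)
    (c : E2) (hc : ∀ D ∈ R, ∀ d : E2, D = Metric.closedBall d 1 → c ≠ d) :
    (frontier (⋂₀ R) ∩ Metric.sphere c 1).encard ≤ 2 := by
  have hcl : IsClosed (⋂₀ R) := isClosed_sInter fun D hD => by
    obtain ⟨e, rfl⟩ := hR D hD; exact Metric.isClosed_closedBall
  have hsq : ∀ x y : E2, dist x y ^ 2 = (x 0 - y 0)^2 + (x 1 - y 1)^2 := by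
    intro x y
    rw [EuclideanSpace.dist_eq, Real.sq_sqrt (by positivity)]
    simp [Fin.sum_univ_two, Real.dist_eq]
  have hcirc : ∀ p ∈ frontier (⋂₀ R) ∩ Metric.sphere c 1,
      (p 0 - c 0)^2 + (p 1 - c 1)^2 = 1 := by
    intro p hp
    rw [← hsq, Metric.mem_sphere.1 hp.2]; norm_num
  have hfr : ∀ q ∈ frontier (⋂₀ R) ∩ Metric.sphere c 1, ∃ d v : ℝ,
      0 < (q 0 - c 0)*d + (q 1 - c 1)*v ∧ ∀ p ∈ frontier (⋂₀ R) ∩ Metric.sphere c 1,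
      (q 0 - c 0)*d + (q 1 - c 1)*v ≤ (p 0 - c 0)*d + (p 1 - c 1)*v := by
    intro q hq
    have hmem : ∀ p ∈ frontier (⋂₀ R) ∩ Metric.sphere c 1, p ∈ ⋂₀ R := fun p hp =>
      hcl.frontier_subset hp.1
    have hni : q ∉ interior (⋂₀ R) := hq.1.2
    rw [hfin.interior_sInter] at hni
    simp only [Set.mem_iInter, not_forall] at hni
    obtain ⟨D, hD, hqD⟩ := hni
    obtain ⟨e, he⟩ := hR D hD
    have hce := hc D hD e he
    rw [he, interior_closedBall _ one_ne_zero, Metric.mem_ball, not_lt] at hqD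
    have hle : ∀ p ∈ frontier (⋂₀ R) ∩ Metric.sphere c 1, (p 0 - e 0)^2 + (p 1 - e 1)^2 ≤ 1 := by
      intro p hp
      have := hmem p hp D hD
      rw [he, Metric.mem_closedBall] at this
      rw [← hsq]
      exact pow_le_one₀ dist_nonneg this
    have hge : 1 ≤ (q 0 - e 0)^2 + (q 1 - e 1)^2 := by
      rw [← hsq]; exact one_le_pow₀ hqD
    have hpos : 0 < (c 0 - e 0)^2 + (c 1 - e 1)^2 := by
      rw [← hsq]; exact pow_pos (dist_pos.2 hce) 2
    have hcq := hcirc q hq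
    have hlq := hle q hq
    refine ⟨e 0 - c 0, e 1 - c 1, by nlinarith, fun p hp => ?_⟩
    have hcp := hcirc p hp
    have hlp := hle p hp
    nlinarith
  have hne : ∀ p q : E2, p ≠ q → ¬ (p 0 - c 0 = q 0 - c 0 ∧ p 1 - c 1 = q 1 - c 1) := by
    rintro p q h ⟨h0, h1⟩
    apply h
    ext i
    fin_cases i
    · simpa using h0
    · simpa using h1
  by_contra hcon
  rw [not_le] at hcon
  have h3 : (3 : ℕ∞) ≤ (frontier (⋂₀ R) ∩ Metric.sphere c 1).encard := by
    have := Order.add_one_le_of_lt hcon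
    rwa [two_add_one_eq_three] at this
  obtain ⟨T, hT, hT3⟩ := Set.exists_subset_encard_eq h3
  obtain ⟨x, y, z, hxy, hxz, hyz, rfl⟩ := Set.encard_eq_three.1 hT3
  have hx := hT (show x ∈ ({x, y, z} : Set E2) by simp)
  have hy := hT (show y ∈ ({x, y, z} : Set E2) by simp)
  have hz := hT (show z ∈ ({x, y, z} : Set E2) by simp)
  have key : ∀ p ∈ frontier (⋂₀ R) ∩ Metric.sphere c 1,
      ∀ q ∈ frontier (⋂₀ R) ∩ Metric.sphere c 1, ∀ s ∈ frontier (⋂₀ R) ∩ Metric.sphere c 1,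
      p ≠ q → s ≠ q →
      ((q 0 - c 0)*(s 1 - c 1)-(q 1 - c 1)*(s 0 - c 0))*
        ((p 0 - c 0)*(q 1 - c 1)-(p 1 - c 1)*(q 0 - c 0)) < 0 := by
    intro p hp q hq s hs hpq hsq'
    by_contra hh
    obtain ⟨d, v, h0, h1⟩ := hfr q hq
    exact aux_core d v _ _ _ _ _ _ h0 (hcirc p hp) (hcirc q hq) (hcirc s hs) (hne _ _ hpq)
      (hne _ _ hsq') (h1 p hp) (h1 s hs) (not_lt.1 hh)
  have k1 := key x hx y hy z hz hxy hyz.symm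
  have k2 := key y hy z hz x hx hyz hxz
  have k3 := key z hz x hx y hy hxz.symm hxy.symm
  exact aux_sign _ _ _ k1 k2 k3
end
end

section
/- There exists a constant c > 0 such that the following holds: for every finite indexed family 𝒟 = (D_i)_{i∈I} of n closed unit disks in ℝ² with pairwise distinct centers, and every natural number k, the number of points x ∈ ℝ² that lie on the boundary circles of at least two of the disks and satisfy λ(x,𝒟) ≤ k is at most c·n·(k+1). (The complexity of the at-most-k level A_{≤k}(𝒟) of the arrangement of the disks is O(nk).) -/
noncomputable section

/-- The level λ(x,𝒟) of a point with respect to an indexed family of sets: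
the number of indices `i` with `x ∉ D i`. -/
def level {I : Type*} (D : I → Set E2) (x : E2) : ℕ := {i | x ∉ D i}.ncard

theorem inter2 (c d : E2) (h : c ≠ d) : {x : E2 | dist x c = 1 ∧ dist x d = 1}.encard ≤ 2 := by
  by_cases h1 : {x : E2 | dist x c = 1 ∧ dist x d = 1}.encard ≤ 1
  · exact h1.trans (by norm_num)
  · rw [not_le, Set.one_lt_encard_iff] at h1
    obtain ⟨a, b, ha, hb, hab⟩ := h1
    refine (Set.encard_le_encard (t := {a, b}) ?_).trans (Set.encard_pair hab).le
    intro x hx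
    have := EuclideanGeometry.eq_of_dist_eq_of_dist_eq_of_finrank_eq_two
      (by simp : Module.finrank ℝ E2 = 2) h hab ha.1 hb.1 hx.1 ha.2 hb.2 hx.2
    simpa using this

theorem biU {I α : Type*} (M : Finset I) (S : I → Set α) (m : ℕ)
    (h : ∀ j ∈ M, (S j).encard ≤ m) : (⋃ j ∈ M, S j).encard ≤ ((M.card * m : ℕ) : ℕ∞) := by
  classical
  induction M using Finset.induction_on with
  | empty => simp
  | insert a s ha ih =>
    rw [Finset.set_biUnion_insert, Finset.card_insert_of_notMem ha]
    refine (Set.encard_union_le _ _).trans ?_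
    have h1 := h a (by simp)
    have h2 := ih (fun j hj => h j (by simp [hj]))
    calc _ ≤ (m : ℕ∞) + ((s.card * m : ℕ) : ℕ∞) := add_le_add h1 h2
      _ = _ := by rw [← Nat.cast_add]; congr 1; ring

theorem crossP (a b a1 b1 : ℝ) (h : a^2+b^2=1) (h1 : a1^2+b1^2=1) (hb : 0 < b) (hb1 : 0 ≤ b1)
    (hlt : a < a1) : 0 < a1 * b - b1 * a := by
  rcases le_or_gt 0 a with ha | ha
  · have : b1 < b := by
      by_contra hh; push Not at hh; nlinarith
    nlinarith
  · rcases lt_trichotomy a1 0 with h0 | h0 | h0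
    · have : b < b1 := by
        by_contra hh; push Not at hh; nlinarith
      nlinarith
    · subst h0
      have : 0 < b1 := lt_of_le_of_ne hb1 (by rintro rfl; norm_num at h1)
      nlinarith
    · nlinarith [mul_pos h0 hb, mul_nonneg hb1 (neg_pos.2 ha).le]

theorem key (a b a0 b0 a1 b1 p q h : ℝ) (e : a^2+b^2=1) (e0 : a0^2+b0^2=1) (e1 : a1^2+b1^2=1)
    (hb : 0 ≤ b) (hb0 : 0 ≤ b0) (hb1 : 0 ≤ b1) (l0 : a0 < a) (l1 : a < a1) (hh : 0 < h)
    (hu : a*p+b*q = h) (hu0 : h ≤ a0*p+b0*q) (hu1 : h ≤ a1*p+b1*q) : False := by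
  have hb' : 0 < b := lt_of_le_of_ne hb (by
    rintro rfl
    have g0 : -1 ≤ a0 := by nlinarith [sq_nonneg b0]
    have g1 : a1 ≤ 1 := by nlinarith [sq_nonneg b1]
    nlinarith)
  have P := crossP a b a1 b1 e e1 hb' hb1 l1
  have Q := crossP (-a) b (-a0) b0 (by linarith [neg_sq a]) (by linarith [neg_sq a0]) hb' hb0
    (by linarith)
  have hi0 : a0*a+b0*b < 1 := by nlinarith [sq_nonneg (b0-b), mul_pos (sub_pos.2 l0) (sub_pos.2 l0)]
  have hi1 : a1*a+b1*b < 1 := by nlinarith [sq_nonneg (b1-b), mul_pos (sub_pos.2 l1) (sub_pos.2 l1)]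
  set x := a1*b-b1*a with hx
  set y := -a0*b-b0*(-a) with hy
  set D := a1*b0-b1*a0 with hD
  have d1 : D = x*(a0*a+b0*b)+y*(a1*a+b1*b) := by
    have : D = D*(a^2+b^2) := by rw [e, mul_one]
    rw [this, hx, hy, hD]; ring
  have d2 : D*h = x*(a0*p+b0*q)+y*(a1*p+b1*q) := by
    rw [← hu, hx, hy, hD]; ring
  have d3 : D < x + y := by nlinarith
  have d4 : (x+y)*h ≤ D*h := by nlinarith
  nlinarith

theorem distsq (x c : E2) : dist x c ^ 2 = (x 0 - c 0)^2 + (x 1 - c 1)^2 := by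
  rw [EuclideanSpace.dist_eq, Real.sq_sqrt (by positivity)]
  simp [Fin.sum_univ_two, Real.dist_eq, sq_abs]

theorem keyE (s : ℝ) (hs : s^2 = 1) (c d x x0 x1 : E2) (hcd : c ≠ d)
    (e : dist x c = 1) (e0 : dist x0 c = 1) (e1 : dist x1 c = 1) (f : dist x d = 1)
    (f0 : dist x0 d ≤ 1) (f1 : dist x1 d ≤ 1)
    (hb : 0 ≤ s*(x 1 - c 1)) (hb0 : 0 ≤ s*(x0 1 - c 1)) (hb1 : 0 ≤ s*(x1 1 - c 1))
    (l0 : x0 0 < x 0) (l1 : x 0 < x1 0) : False := by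
  have E := distsq x c
  have E0 := distsq x0 c
  have E1 := distsq x1 c
  have F := distsq x d
  have F0 := distsq x0 d
  have F1 := distsq x1 d
  have G := distsq d c
  have hp : 0 < dist d c := dist_pos.2 hcd.symm
  have f0' : dist x0 d ^2 ≤ 1 := by nlinarith [dist_nonneg (x := x0) (y := d)]
  have f1' : dist x1 d ^2 ≤ 1 := by nlinarith [dist_nonneg (x := x1) (y := d)]
  rw [e] at E; rw [e0] at E0; rw [e1] at E1; rw [f] at F
  have hm : ∀ t w : ℝ, (s*t)*(s*w) = t*w := fun t w => by linear_combination t*w*hs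
  refine key (x 0 - c 0) (s*(x 1 - c 1)) (x0 0 - c 0) (s*(x0 1 - c 1)) (x1 0 - c 0) (s*(x1 1 - c 1))
    (d 0 - c 0) (s*(d 1 - c 1)) (dist d c ^2/2) ?_ ?_ ?_ hb hb0 hb1 (by linarith) (by linarith)
    (by positivity) ?_ ?_ ?_
  · rw [mul_pow, hs]; linarith
  · rw [mul_pow, hs]; linarith
  · rw [mul_pow, hs]; linarith
  · rw [hm]; linarith
  · rw [hm]; linarith
  · rw [hm]; linarith

theorem sameE (s : ℝ) (hs : s^2 = 1) (c x y : E2) (e : dist x c = 1) (e0 : dist y c = 1)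
    (hb : 0 ≤ s*(x 1 - c 1)) (hb0 : 0 ≤ s*(y 1 - c 1)) (h : x 0 = y 0) : x = y := by
  have E := distsq x c
  have E0 := distsq y c
  rw [e] at E; rw [e0] at E0; rw [h] at E
  have h2 : (s*(x 1 - c 1))^2 = (s*(y 1 - c 1))^2 := by
    rw [mul_pow, mul_pow, hs]; linarith
  have h3 := (sq_eq_sq₀ hb hb0).1 h2
  have hs0 : s ≠ 0 := by rintro rfl; norm_num at hs
  have h4 := mul_left_cancel₀ hs0 h3
  ext i
  fin_cases i
  · exact h
  · simpa using h4

theorem half {I : Type} [Fintype I] (ctr : I → E2) (hinj : Function.Injective ctr) (k : ℕ)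
    (s : ℝ) (hs : s^2 = 1) (i : I) :
    {x : E2 | dist x (ctr i) = 1 ∧ 0 ≤ s*(x 1 - ctr i 1) ∧ (∃ j, i ≠ j ∧ dist x (ctr j) = 1) ∧
      level (fun i => Metric.closedBall (ctr i) 1) x ≤ k}.encard ≤ ((4*k+2 : ℕ) : ℕ∞) := by
  classical
  set F := {x : E2 | dist x (ctr i) = 1 ∧ 0 ≤ s*(x 1 - ctr i 1) ∧
    (∃ j, i ≠ j ∧ dist x (ctr j) = 1) ∧
      level (fun i => Metric.closedBall (ctr i) 1) x ≤ k} with hF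
  let S : I → Set E2 := fun j => {x : E2 | dist x (ctr i) = 1 ∧ dist x (ctr j) = 1}
  have hS : ∀ j, i ≠ j → (S j).encard ≤ (2:ℕ) := fun j hj => inter2 _ _ (hinj.ne hj)
  have hfin : F.Finite := by
    refine Set.Finite.subset (s := ⋃ j ∈ Finset.univ.filter (fun j => i ≠ j), S j) ?_ ?_
    · refine Set.finite_of_encard_le_coe (biU _ S 2 ?_)
      intro j hj
      exact hS j (by simpa using hj)
    · rintro x ⟨h1, _, ⟨j, hj, h2⟩, _⟩
      simp only [Set.mem_iUnion]
      exact ⟨j, by simpa using hj, h1, h2⟩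
  rcases F.eq_empty_or_nonempty with he | hne
  · rw [he]; simp
  obtain ⟨x0, hx0, m0⟩ := Set.exists_min_image F (fun x => x 0) hfin hne
  obtain ⟨x1, hx1, m1⟩ := Set.exists_max_image F (fun x => x 0) hfin hne
  let M : E2 → Finset I := fun y => Finset.univ.filter (fun j => ¬ dist y (ctr j) ≤ 1)
  have hM : ∀ y ∈ F, (M y).card ≤ k := by
    intro y hy
    refine le_trans (le_of_eq ?_) hy.2.2.2
    rw [level, ← Set.ncard_coe_finset]
    congr 1
    ext j
    simp [M]
  have hMi : ∀ y ∈ F, ∀ j ∈ M y, i ≠ j := by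
    rintro y hy j hj rfl
    simp only [M, Finset.mem_filter] at hj
    exact hj.2 hy.1.le
  have hsub : F ⊆ {x0, x1} ∪ ⋃ j ∈ M x0 ∪ M x1, S j := by
    intro x hx
    by_cases hx0' : x = x0
    · left; simp [hx0']
    by_cases hx1' : x = x1
    · left; simp [hx1']
    right
    obtain ⟨j, hj, hxj⟩ := hx.2.2.1
    simp only [Set.mem_iUnion]
    refine ⟨j, ?_, hx.1, hxj⟩
    by_contra hc
    simp only [M, Finset.mem_union, Finset.mem_filter, Finset.mem_univ, true_and, not_or,
      not_not] at hc
    refine keyE s hs (ctr i) (ctr j) x x0 x1 (hinj.ne hj) hx.1 hx0.1 hx1.1 hxj hc.1 hc.2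
      hx.2.1 hx0.2.1 hx1.2.1 (lt_of_le_of_ne (m0 x hx) ?_) (lt_of_le_of_ne (m1 x hx) ?_)
    · intro h; exact hx0' (sameE s hs _ _ _ hx.1 hx0.1 hx.2.1 hx0.2.1 h.symm)
    · intro h; exact hx1' (sameE s hs _ _ _ hx.1 hx1.1 hx.2.1 hx1.2.1 h)
  refine (Set.encard_le_encard hsub).trans ((Set.encard_union_le _ _).trans ?_)
  have b1 : ({x0, x1} : Set E2).encard ≤ ((2:ℕ) : ℕ∞) := by
    refine (Set.encard_insert_le _ _).trans ?_
    rw [Set.encard_singleton]; norm_num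
  have b2 := biU (M x0 ∪ M x1) S 2 (by
    intro j hj
    rcases Finset.mem_union.1 hj with h | h
    · exact hS j (hMi x0 hx0 j h)
    · exact hS j (hMi x1 hx1 j h))
  refine (add_le_add b1 b2).trans ?_
  rw [← Nat.cast_add, Nat.cast_le]
  have := Finset.card_union_le (M x0) (M x1)
  have := hM x0 hx0
  have := hM x1 hx1
  omega

theorem stmt4 :
    ∃ c : ℕ, 0 < c ∧
      ∀ (I : Type) [Fintype I] (ctr : I → E2), Function.Injective ctr →
        ∀ k : ℕ,
          {x : E2 |
              (∃ i j : I, i ≠ j ∧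
                x ∈ frontier (Metric.closedBall (ctr i) 1) ∧
                x ∈ frontier (Metric.closedBall (ctr j) 1)) ∧
              level (fun i => Metric.closedBall (ctr i) 1) x ≤ k}.encard
            ≤ ((c * Fintype.card I * (k + 1) : ℕ) : ℕ∞) := by
  refine ⟨8, by norm_num, ?_⟩
  intro I _ ctr hinj k
  let T : ℝ → I → Set E2 := fun s i =>
    {x : E2 | dist x (ctr i) = 1 ∧ 0 ≤ s*(x 1 - ctr i 1) ∧ (∃ j, i ≠ j ∧ dist x (ctr j) = 1) ∧
      level (fun i => Metric.closedBall (ctr i) 1) x ≤ k}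
  have hT : ∀ i ∈ (Finset.univ : Finset I), (T 1 i ∪ T (-1) i).encard ≤ ((8*k+4 : ℕ) : ℕ∞) := by
    intro i _
    refine (Set.encard_union_le _ _).trans
      ((add_le_add (half ctr hinj k 1 (by norm_num) i) (half ctr hinj k (-1) (by norm_num) i)).trans ?_)
    rw [← Nat.cast_add, Nat.cast_le]
    omega
  refine (Set.encard_le_encard (t := ⋃ i ∈ (Finset.univ : Finset I), (T 1 i ∪ T (-1) i)) ?_).trans
    ((biU _ _ _ hT).trans ?_)
  · rintro x ⟨⟨i, j, hij, hi, hj⟩, hl⟩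
    rw [frontier_closedBall _ one_ne_zero, Metric.mem_sphere] at hi hj
    simp only [Set.mem_iUnion]
    refine ⟨i, Finset.mem_univ _, ?_⟩
    rcases le_total 0 (x 1 - ctr i 1) with h | h
    · left; exact ⟨hi, by linarith, ⟨j, hij, hj⟩, hl⟩
    · right; exact ⟨hi, by linarith, ⟨j, hij, hj⟩, hl⟩
  · rw [Nat.cast_le, Finset.card_univ]
    nlinarith [Nat.zero_le (Fintype.card I)]
end
end

section
/- There exists a constant c > 0 such that the following holds: for every finite indexed family 𝒟 of closed unit disks in ℝ² and every natural number k, the set A_{≤k}(𝒟) = {x ∈ ℝ² : λ(x,𝒟) ≤ k}, regarded as a topological subspace of ℝ², has at most c·(k+1)² connected components. -/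
noncomputable section

/-- A_{≤k}(𝒟): points of level at most k. -/
def levelSetLE {I : Type*} (D : I → Set E2) (k : ℕ) : Set E2 := {x | level D x ≤ k}

theorem aux_count {I T : Type} [Fintype I] (t : Finset T) (k : ℕ)
    (B X : T → Finset I) (hB : ∀ a ∈ t, (B a).card ≤ 2) (hX : ∀ a ∈ t, (X a).card ≤ k)
    (hd : ∀ a ∈ t, Disjoint (B a) (X a))
    (hc : ∀ a ∈ t, ∀ b ∈ t, Disjoint (B a) (X b) → Disjoint (B b) (X a) → a = b) :
    t.card ≤ 8 * (k + 1) ^ 2 := by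
  classical
  set q : ℝ := 1 / (2 * (k + 1)) with hq
  have hk0 : (0:ℝ) < 2 * (k + 1) := by positivity
  have hq0 : 0 < q := by positivity
  have hq1 : q ≤ 1 / 2 := by
    rw [hq, div_le_div_iff₀ hk0 (by norm_num)]
    have : (0:ℝ) ≤ k := Nat.cast_nonneg k
    linarith
  have hq1' : 0 ≤ 1 - q := by linarith
  let f : T → I → ℝ := fun a i => if i ∈ X a then 0 else q
  let g : T → I → ℝ := fun a i => if i ∈ B a then 0 else 1 - q
  let h : T → Finset I → ℝ := fun a R => (∏ i ∈ R, f a i) * ∏ i ∈ Finset.univ \ R, g a i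
  let w : Finset I → ℝ := fun R => (∏ i ∈ R, q) * ∏ i ∈ Finset.univ \ R, (1 - q)
  have hf0 : ∀ a i, 0 ≤ f a i := by intro a i; simp only [f]; split_ifs <;> linarith
  have hg0 : ∀ a i, 0 ≤ g a i := by intro a i; simp only [g]; split_ifs <;> linarith
  have hf1 : ∀ a i, f a i ≤ q := by intro a i; simp only [f]; split_ifs <;> linarith
  have hg1 : ∀ a i, g a i ≤ 1 - q := by intro a i; simp only [g]; split_ifs <;> linarith
  have hw : ∑ R ∈ (Finset.univ : Finset I).powerset, w R = 1 := by
    rw [← Finset.prod_add]; simp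
  have hw0 : ∀ R, 0 ≤ w R := fun R =>
    mul_nonneg (Finset.prod_nonneg fun _ _ => hq0.le) (Finset.prod_nonneg fun _ _ => hq1')
  have hhw : ∀ a R, h a R ≤ w R := by
    intro a R
    refine mul_le_mul (Finset.prod_le_prod (fun i _ => hf0 a i) fun i _ => hf1 a i)
      (Finset.prod_le_prod (fun i _ => hg0 a i) fun i _ => hg1 a i)
      (Finset.prod_nonneg fun i _ => hg0 a i) (Finset.prod_nonneg fun _ _ => hq0.le)
  have hne : ∀ a R, h a R ≠ 0 → B a ⊆ R ∧ Disjoint R (X a) := by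
    intro a R hR
    have h1 := left_ne_zero_of_mul hR
    have h2 := right_ne_zero_of_mul hR
    rw [Finset.prod_ne_zero_iff] at h1 h2
    constructor
    · intro i hi
      by_contra hiR
      exact h2 i (by simp [hiR]) (by simp [g, hi])
    · rw [Finset.disjoint_left]
      intro i hi hiX
      exact h1 i hi (by simp [f, hiX])
  have hle : ∀ R, ∑ a ∈ t, h a R ≤ w R := by
    intro R
    by_cases hex : ∃ a ∈ t, h a R ≠ 0
    · obtain ⟨a, ha, haR⟩ := hex
      rw [Finset.sum_eq_single_of_mem a ha]
      · exact hhw a R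
      · intro b hb hba
        by_contra hbR
        obtain ⟨h1, h2⟩ := hne a R haR
        obtain ⟨h3, h4⟩ := hne b R hbR
        exact hba (hc b hb a ha (h2.mono_left h3) (h4.mono_left h1))
    · push Not at hex
      rw [Finset.sum_eq_zero hex]
      exact hw0 R
  have hlow : ∀ a ∈ t, q ^ 2 * (1 / 2) ≤ ∑ R ∈ (Finset.univ : Finset I).powerset, h a R := by
    intro a ha
    simp only [h]
    rw [← Finset.prod_add]
    have heq : ∀ i, f a i + g a i = (if i ∈ B a then q else 1) * (if i ∈ X a then 1 - q else 1) := by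
      intro i
      simp only [f, g]
      by_cases h1 : i ∈ B a
      · have : i ∉ X a := Finset.disjoint_left.mp (hd a ha) h1
        simp [h1, this]
      · by_cases h2 : i ∈ X a <;> simp [h1, h2]
    simp_rw [heq]
    rw [Finset.prod_mul_distrib, Finset.prod_ite_mem, Finset.prod_ite_mem]
    simp only [Finset.univ_inter, Finset.prod_const]
    have hb : q ^ 2 ≤ q ^ (B a).card := pow_le_pow_of_le_one hq0.le (by linarith) (hB a ha)
    have hx : (1 - q) ^ k ≤ (1 - q) ^ (X a).card :=
      pow_le_pow_of_le_one hq1' (by linarith) (hX a ha)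
    have hbern : 1 / 2 ≤ (1 - q) ^ k := by
      have := one_add_mul_le_pow (a := -q) (by linarith) k
      have h3 : (k:ℝ) * q ≤ 1 / 2 := by
        rw [hq, mul_one_div, div_le_div_iff₀ hk0 (by norm_num)]
        linarith
      rw [← sub_eq_add_neg] at this
      linarith
    exact mul_le_mul hb (hbern.trans hx) (by norm_num) (by positivity)
  have htot : (t.card : ℝ) * (q ^ 2 * (1 / 2)) ≤ 1 := by
    calc (t.card : ℝ) * (q ^ 2 * (1 / 2)) = ∑ a ∈ t, q ^ 2 * (1 / 2) := by simp
      _ ≤ ∑ a ∈ t, ∑ R ∈ (Finset.univ : Finset I).powerset, h a R := Finset.sum_le_sum hlow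
      _ = ∑ R ∈ (Finset.univ : Finset I).powerset, ∑ a ∈ t, h a R := Finset.sum_comm
      _ ≤ ∑ R ∈ (Finset.univ : Finset I).powerset, w R := Finset.sum_le_sum fun R _ => hle R
      _ = 1 := hw
  have hfin : (t.card : ℝ) ≤ 8 * ((k:ℝ) + 1) ^ 2 := by
    have : q ^ 2 * (1 / 2) = 1 / (8 * ((k:ℝ) + 1) ^ 2) := by
      rw [hq]; field_simp; norm_num
    rw [this, mul_one_div, div_le_one (by positivity)] at htot
    exact htot
  exact_mod_cast hfin

theorem aux_point {I : Type} [Fintype I] (D : I → Set E2) (hcv : ∀ i, Convex ℝ (D i))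
    (hcl : ∀ i, IsClosed (D i)) (k : ℕ) (x : E2) (hx : x ∈ levelSetLE D k) :
    ∃ p ∈ connectedComponentIn (levelSetLE D k) x, ∃ B : Finset I, B.card ≤ 2 ∧
      (∀ i ∈ B, p ∈ D i) ∧ ∀ z, (∀ i ∈ B, z ∈ D i) → ‖p‖ ≤ ‖z‖ := by
  classical
  set S : Finset I := Finset.univ.filter (fun i => x ∈ D i) with hS
  set K : Set E2 := ⋂ i ∈ S, D i with hK
  have hKc : IsClosed K := isClosed_biInter fun i _ => hcl i
  have hKv : Convex ℝ K := convex_iInter₂ fun i _ => hcv i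
  have hxK : x ∈ K := by simp [hK, hS]
  have hKA : K ⊆ levelSetLE D k := by
    intro z hz
    refine le_trans (Set.ncard_le_ncard ?_ (Set.toFinite _)) hx
    intro i hi hxi
    exact hi (by simp only [hK, Set.mem_iInter] at hz; exact hz i (by simp [hS, hxi]))
  have hKC : K ⊆ connectedComponentIn (levelSetLE D k) x :=
    hKv.isPreconnected.subset_connectedComponentIn hxK hKA
  obtain ⟨p, hpK, hp⟩ := hKc.exists_infDist_eq_dist ⟨x, hxK⟩ (0 : E2)
  have hmin : ∀ z ∈ K, ‖p‖ ≤ ‖z‖ := by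
    intro z hz
    have := Metric.infDist_le_dist_of_mem (x := (0 : E2)) hz
    rw [hp] at this
    simpa using this
  have hpS : ∀ i ∈ S, p ∈ D i := by simpa [hK] using hpK
  refine ⟨p, hKC hpK, ?_⟩
  let F : Option I → Set E2 := fun o => o.elim (Metric.ball 0 ‖p‖) D
  have hF : ∀ i ∈ Finset.insertNone S, Convex ℝ (F i) := by
    rintro (_ | i) _
    · exact convex_ball _ _
    · exact hcv i
  by_contra hcon
  push Not at hcon
  have := Convex.helly_theorem' (𝕜 := ℝ) hF (by
    intro J hJ hcard
    rw [finrank_euclideanSpace_fin] at hcard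
    by_cases hn : none ∈ J
    · have hB : (Finset.eraseNone J).card ≤ 2 := by
        have := Finset.card_eraseNone_of_mem hn
        omega
      obtain ⟨z, hz, hzp⟩ := hcon (Finset.eraseNone J) hB (by
        intro i hi
        exact hpS i (Finset.some_mem_insertNone.mp (hJ (Finset.mem_eraseNone.mp hi))))
      refine ⟨z, ?_⟩
      simp only [Set.mem_iInter]
      rintro (_ | i) hi
      · simpa [F] using hzp
      · exact hz i (Finset.mem_eraseNone.mpr hi)
    · refine ⟨p, ?_⟩
      simp only [Set.mem_iInter]
      rintro (_ | i) hi
      · exact absurd hi hn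
      · exact hpS i (Finset.some_mem_insertNone.mp (hJ hi)))
  obtain ⟨z, hz⟩ := this
  simp only [Set.mem_iInter] at hz
  have h1 := hz none (by simp)
  have h2 : z ∈ K := by
    simp only [hK, Set.mem_iInter]
    exact fun i hi => hz (some i) (Finset.some_mem_insertNone.mpr hi)
  have h3 := hmin z h2
  have h4 : ‖z‖ < ‖p‖ := by simpa [F] using h1
  linarith

theorem stmt5 :
    ∃ c : ℕ, 0 < c ∧
      ∀ (I : Type) [Fintype I] (D : I → Set E2),
        (∀ i, ∃ ctr : E2, D i = Metric.closedBall ctr 1) →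
        ∀ k : ℕ,
          {C : Set E2 | ∃ x ∈ levelSetLE D k,
              C = connectedComponentIn (levelSetLE D k) x}.encard
            ≤ ((c * (k + 1) ^ 2 : ℕ) : ℕ∞) := by
  classical
  refine ⟨8, by norm_num, ?_⟩
  intro I _ D hD k
  have hcv : ∀ i, Convex ℝ (D i) := by
    intro i; obtain ⟨c, hc⟩ := hD i; rw [hc]; exact convex_closedBall _ _
  have hcl : ∀ i, IsClosed (D i) := by
    intro i; obtain ⟨c, hc⟩ := hD i; rw [hc]; exact Metric.isClosed_closedBall
  set A := levelSetLE D k with hA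
  set S := {C : Set E2 | ∃ x ∈ A, C = connectedComponentIn A x} with hS
  have key : ∀ C : Set E2, ∃ (p : E2) (B : Finset I), C ∈ S → (C = connectedComponentIn A p ∧
      p ∈ A ∧ B.card ≤ 2 ∧ (∀ i ∈ B, p ∈ D i) ∧ ∀ z, (∀ i ∈ B, z ∈ D i) → ‖p‖ ≤ ‖z‖) := by
    intro C
    by_cases hC : C ∈ S
    · obtain ⟨x, hx, rfl⟩ := hC
      obtain ⟨p, hp, B, hB⟩ := aux_point D hcv hcl k x hx
      exact ⟨p, B, fun _ => ⟨connectedComponentIn_eq hp, connectedComponentIn_subset _ _ hp, hB⟩⟩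
    · exact ⟨0, ∅, fun h => absurd h hC⟩
  choose p B hpB using key
  by_contra hlt
  push Not at hlt
  have hle := Order.add_one_le_of_lt hlt
  obtain ⟨t, htS, htc⟩ := Set.exists_subset_encard_eq hle
  have htf : t.Finite := Set.finite_of_encard_eq_coe (k := 8 * (k + 1) ^ 2 + 1) (by rw [htc]; norm_cast)
  have hcount := aux_count htf.toFinset k B (fun C => Finset.univ.filter fun i => p C ∉ D i)
    (fun C hC => (hpB C (htS (by simpa using hC))).2.2.1)
    (fun C hC => by
      have := (hpB C (htS (by simpa using hC))).2.1
      change level D (p C) ≤ k at this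
      unfold level at this
      rw [← Set.ncard_coe_finset]
      simpa using this)
    (fun C hC => by
      rw [Finset.disjoint_left]
      intro i hi
      simpa using (hpB C (htS (by simpa using hC))).2.2.2.1 i hi)
    (fun C hC C' hC' h1 h2 => by
      obtain ⟨e, -, -, m, n⟩ := hpB C (htS (by simpa using hC))
      obtain ⟨e', -, -, m', n'⟩ := hpB C' (htS (by simpa using hC'))
      rw [Finset.disjoint_left] at h1 h2
      simp only [Finset.mem_filter, Finset.mem_univ, true_and, not_not] at h1 h2
      have hn : ‖p C‖ = ‖p C'‖ := le_antisymm (n _ fun i hi => h1 hi) (n' _ fun i hi => h2 hi)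
      have hmid := n ((1/2 : ℝ) • p C + (1/2 : ℝ) • p C') (fun i hi =>
        hcv i (m i hi) (h1 hi) (by norm_num) (by norm_num) (by norm_num))
      by_cases hpp : p C = p C'
      · rw [e, e', hpp]
      · have := norm_combo_lt_of_ne (le_refl ‖p C‖) hn.ge hpp (a := 1/2) (b := 1/2)
          (by norm_num) (by norm_num) (by norm_num)
        linarith)
  rw [htf.encard_eq_coe_toFinset_card] at htc
  have : htf.toFinset.card = 8 * (k + 1) ^ 2 + 1 := by exact_mod_cast htc
  omega
end
end

section
/- There exists a constant c > 0 such that the following holds: for every finite indexed family 𝒟 of closed unit disks in ℝ² with pairwise distinct centers, every natural number k, and every circle C of radius 1 whose center is distinct from the centers of all disks in 𝒟, the number of points x ∈ C that lie on the boundary circle of at least one disk of 𝒟 and satisfy λ(x,𝒟) ≤ k is at most c·(k+1). (A unit circle intersects only O(k) edges of A_{≤k}(𝒟).) -/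
noncomputable section

open Set in
theorem aux_count_s6 {I : Type} [Fintype I] (D : I → Set E2) (k : ℕ) (T : Set E2) (f : E2 → ℝ)
    (hf : InjOn f T) (hl : ∀ y ∈ T, level D y ≤ k)
    (hT : ∀ y ∈ T, ∃ i, y ∈ D i ∧ ∀ y2 ∈ T, f y2 < f y → y2 ∉ D i) :
    T.Finite ∧ T.ncard ≤ k + 1 := by
  classical
  rcases T.eq_empty_or_nonempty with rfl | hne
  · simp
  have : Nonempty I := by
    obtain ⟨y, hy⟩ := hne
    exact ⟨(hT y hy).choose⟩
  choose! j hj1 hj2 using hT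
  have hinj : InjOn j T := by
    intro y hy y' hy' h
    by_contra hne
    have hfne : f y ≠ f y' := fun h' => hne (hf hy hy' h')
    rcases lt_or_gt_of_ne hfne with h1 | h1
    · exact hj2 y' hy' y hy h1 (h ▸ hj1 y hy)
    · exact hj2 y hy y' hy' h1 (h ▸ hj1 y' hy')
  have hfin : T.Finite := Set.Finite.of_finite_image (Set.toFinite (j '' T)) hinj
  refine ⟨hfin, ?_⟩
  obtain ⟨y, hy, hmin⟩ := Set.exists_min_image T f hfin hne
  have h1 : (T \ {y}).ncard ≤ {i | y ∉ D i}.ncard := by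
    apply Set.ncard_le_ncard_of_injOn j _ (hinj.mono sdiff_subset) (Set.toFinite _)
    intro y' hy'
    have : f y ≠ f y' := fun h' => hy'.2 (hf hy hy'.1 h').symm
    exact hj2 y' hy'.1 y hy (lt_of_le_of_ne (hmin y' hy'.1) this)
  have h2 := hl y hy
  unfold level at h2
  have h3 := Set.ncard_sdiff_singleton_add_one hy hfin
  omega

theorem aux_trig (c s c' s' p q h : ℝ) (h1 : c ^ 2 + s ^ 2 = 1) (h2 : c' ^ 2 + s' ^ 2 = 1)
    (hs : 0 < s) (hs' : 0 < s') (hcc : c < c') (hh : 0 < h) (hp : h ≤ p)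
    (he : c' * p + s' * q = h) : c * p + s * q < h := by
  by_contra hcon
  push Not at hcon
  have hc1 : c' < 1 := by nlinarith
  have hc2 : -1 < c := by nlinarith
  have hD : 0 < s * c' - c * s' := by
    rcases le_or_gt c' 0 with h0 | h0
    · have : s < s' := by
        by_contra hx
        push Not at hx
        nlinarith
      nlinarith
    · rcases le_or_gt c 0 with h3 | h3
      · nlinarith [mul_pos hs h0, mul_nonneg (neg_nonneg.2 h3) hs'.le]
      · have : s' < s := by
          by_contra hx
          push Not at hx
          nlinarith
        nlinarith
  have key : s * (1 - c') < s' * (1 - c) := by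
    apply lt_of_pow_lt_pow_left₀ 2 (by nlinarith)
    have e1 : (s * (1 - c')) ^ 2 = (1 - c ^ 2) * (1 - c') ^ 2 := by rw [← h1]; ring
    have e2 : (s' * (1 - c)) ^ 2 = (1 - c' ^ 2) * (1 - c) ^ 2 := by rw [← h2]; ring
    rw [e1, e2]
    have : 0 < (1 - c) * (1 - c') * (2 * (c' - c)) := by
      apply mul_pos (mul_pos _ _) <;> linarith
    nlinarith
  have e : s * h = (s * c' - c * s') * p + s' * (c * p + s * q) := by rw [← he]; ring
  have i1 := mul_le_mul_of_nonneg_left hp hD.le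
  have i2 := mul_le_mul_of_nonneg_left hcon hs'.le
  nlinarith [mul_lt_mul_of_pos_right key hh]

theorem aux_dist (x y : E2) : dist x y ^ 2 = (x 0 - y 0) ^ 2 + (x 1 - y 1) ^ 2 := by
  rw [EuclideanSpace.dist_eq, Real.sq_sqrt (by positivity)]
  simp [Fin.sum_univ_two, Real.dist_eq, sq_abs]

theorem aux_mem (x y : E2) :
    x ∈ Metric.closedBall y 1 ↔ (x 0 - y 0) ^ 2 + (x 1 - y 1) ^ 2 ≤ 1 := by
  rw [Metric.mem_closedBall, ← aux_dist, sq_le_one_iff₀ dist_nonneg]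

theorem aux_sph (x y : E2) :
    x ∈ Metric.sphere y 1 ↔ (x 0 - y 0) ^ 2 + (x 1 - y 1) ^ 2 = 1 := by
  rw [Metric.mem_sphere, ← aux_dist, pow_eq_one_iff_of_nonneg dist_nonneg two_ne_zero]

open Set in
theorem aux_two (z w : E2) (h : z ≠ w) :
    (Metric.sphere z 1 ∩ Metric.sphere w 1).encard ≤ 2 := by
  rcases Set.subsingleton_or_nontrivial (Metric.sphere z 1 ∩ Metric.sphere w 1) with hs | hs
  · exact (Set.encard_le_one_iff_subsingleton.2 hs).trans (by norm_num)
  obtain ⟨a, ha, b, hb, hab⟩ := hs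
  have hsub : Metric.sphere z 1 ∩ Metric.sphere w 1 ⊆ {a, b} := by
    intro c hc'
    exact EuclideanGeometry.eq_of_dist_eq_of_dist_eq_of_finrank_eq_two (V := E2) (P := E2)
      (by simp) h hab ha.1 hb.1 hc'.1 ha.2 hb.2 hc'.2
  exact (Set.encard_le_encard hsub).trans (Set.encard_pair hab).le

def sdet (e : ℝ) (z x0 x : E2) : ℝ :=
  e * ((x0 0 - z 0) * (x 1 - z 1) - (x0 1 - z 1) * (x 0 - z 0))

def sdot (z x0 x : E2) : ℝ :=
  (x0 0 - z 0) * (x 0 - z 0) + (x0 1 - z 1) * (x 1 - z 1)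

theorem aux_sumsq (e : ℝ) (he : e ^ 2 = 1) (z x0 x : E2) (h0 : x0 ∈ Metric.sphere z 1) 
    (h : x ∈ Metric.sphere z 1) : sdot z x0 x ^ 2 + sdet e z x0 x ^ 2 = 1 := by
  rw [aux_sph] at h0 h
  unfold sdot sdet
  rw [mul_pow, he]
  calc _ = ((x0 0 - z 0) ^ 2 + (x0 1 - z 1) ^ 2) * ((x 0 - z 0) ^ 2 + (x 1 - z 1) ^ 2) := by ring
    _ = 1 := by rw [h0, h]; norm_num

theorem aux_ext (e : ℝ) (he : e ^ 2 = 1) (z x0 x y : E2) (h0 : x0 ∈ Metric.sphere z 1)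
    (h1 : sdot z x0 x = sdot z x0 y) (h2 : sdet e z x0 x = sdet e z x0 y) : x = y := by
  rw [aux_sph] at h0
  unfold sdot at h1
  unfold sdet at h2
  have hne : e ≠ 0 := by rintro rfl; norm_num at he
  have h2 := mul_left_cancel₀ hne h2
  ext i
  fin_cases i
  · show x 0 = y 0
    linear_combination (y 0 - x 0) * h0 + (x0 0 - z 0) * h1 - (x0 1 - z 1) * h2
  · show x 1 = y 1
    linear_combination (y 1 - x 1) * h0 + (x0 1 - z 1) * h1 + (x0 0 - z 0) * h2

theorem aux_geom (e : ℝ) (he : e ^ 2 = 1) (z x0 x y w : E2) (h0 : x0 ∈ Metric.sphere z 1)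
    (hx : x ∈ Metric.sphere z 1) (hy : y ∈ Metric.sphere z 1) (hzw : z ≠ w)
    (h0w : x0 ∈ Metric.closedBall w 1) (hyw : y ∈ Metric.sphere w 1)
    (hxd : 0 < sdet e z x0 x) (hyd : 0 < sdet e z x0 y) (hlt : sdot z x0 x < sdot z x0 y) :
    x ∉ Metric.closedBall w 1 := by
  have q1 := aux_sumsq e he z x0 x h0 hx
  have q2 := aux_sumsq e he z x0 y h0 hy
  have hh : 0 < ((w 0 - z 0) ^ 2 + (w 1 - z 1) ^ 2) / 2 := by
    have := aux_dist w z
    rw [← this]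
    have := dist_pos.2 hzw.symm
    positivity
  have key : ∀ t : E2, sdot z x0 t * sdot z x0 w + sdet e z x0 t * sdet e z x0 w =
      ((x0 0 - z 0) ^ 2 + (x0 1 - z 1) ^ 2) *
        ((t 0 - z 0) * (w 0 - z 0) + (t 1 - z 1) * (w 1 - z 1)) := by
    intro t
    unfold sdot sdet
    linear_combination (((x0 0 - z 0) * (t 1 - z 1) - (x0 1 - z 1) * (t 0 - z 0)) *
      ((x0 0 - z 0) * (w 1 - z 1) - (x0 1 - z 1) * (w 0 - z 0))) * he
  have k1 := key x
  have k2 := key y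
  rw [aux_mem] at h0w ⊢
  rw [aux_sph] at h0 hx hy hyw
  rw [h0] at k1 k2
  have := aux_trig _ _ _ _ (sdot z x0 w) (sdet e z x0 w) _ q1 q2 hxd hyd hlt hh
    (by unfold sdot; linarith) (by rw [k2]; linarith)
  rw [k1] at this
  intro hc
  linarith

theorem aux_anti (z x0 x w : E2) (h0 : x0 ∈ Metric.sphere z 1)
    (hx : x ∈ Metric.sphere z 1) (hzw : z ≠ w)
    (h0w : x0 ∈ Metric.closedBall w 1) (hxw : x ∈ Metric.sphere w 1)
    (h1 : sdot z x0 x = -1) : False := by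
  have hh : 0 < ((w 0 - z 0) ^ 2 + (w 1 - z 1) ^ 2) := by
    rw [← aux_dist w z]
    have := dist_pos.2 hzw.symm
    positivity
  rw [aux_mem] at h0w
  rw [aux_sph] at h0 hx hxw
  unfold sdot at h1
  have e0 : (x 0 - z 0) + (x0 0 - z 0) = 0 := by
    apply pow_eq_zero_iff two_ne_zero |>.1
    nlinarith [sq_nonneg ((x 0 - z 0) + (x0 0 - z 0)), sq_nonneg ((x 1 - z 1) + (x0 1 - z 1))]
  have e1 : (x 1 - z 1) + (x0 1 - z 1) = 0 := by
    apply pow_eq_zero_iff two_ne_zero |>.1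
    nlinarith [sq_nonneg ((x 0 - z 0) + (x0 0 - z 0)), sq_nonneg ((x 1 - z 1) + (x0 1 - z 1))]
  have f0 : x 0 = 2 * z 0 - x0 0 := by linarith
  have f1 : x 1 = 2 * z 1 - x0 1 := by linarith
  rw [f0, f1] at hxw
  nlinarith

theorem aux_side (e : ℝ) (he : e ^ 2 = 1) {I : Type} [Fintype I] (ctr : I → E2) (k : ℕ)
    (z x0 : E2) (hz : ∀ i, z ≠ ctr i) (h0 : x0 ∈ Metric.sphere z 1) :
    {x : E2 | x ∈ Metric.sphere z 1 ∧ 0 < sdet e z x0 x ∧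
      (∃ i, x ∈ Metric.sphere (ctr i) 1 ∧ x0 ∈ Metric.closedBall (ctr i) 1) ∧
      level (fun i => Metric.closedBall (ctr i) 1) x ≤ k}.encard ≤ ((k + 1 : ℕ) : ℕ∞) := by
  set T := {x : E2 | x ∈ Metric.sphere z 1 ∧ 0 < sdet e z x0 x ∧
      (∃ i, x ∈ Metric.sphere (ctr i) 1 ∧ x0 ∈ Metric.closedBall (ctr i) 1) ∧
      level (fun i => Metric.closedBall (ctr i) 1) x ≤ k} with hT
  have := aux_count_s6 (fun i => Metric.closedBall (ctr i) 1) k T (sdot z x0) ?_ ?_ ?_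
  · rw [← this.1.cast_ncard_eq]
    exact_mod_cast this.2
  · rintro x ⟨hx1, hx2, -⟩ y ⟨hy1, hy2, -⟩ hxy
    have q1 := aux_sumsq e he z x0 x h0 hx1
    have q2 := aux_sumsq e he z x0 y h0 hy1
    refine aux_ext e he z x0 x y h0 hxy ?_
    rw [hxy] at q1
    refine (pow_left_inj₀ hx2.le hy2.le two_ne_zero).1 ?_
    linarith
  · exact fun y hy => hy.2.2.2
  · rintro y ⟨hy1, hy2, ⟨i, hi1, hi2⟩, -⟩
    refine ⟨i, Metric.sphere_subset_closedBall hi1, ?_⟩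
    rintro x ⟨hx1, hx2, -⟩ hlt
    exact aux_geom e he z x0 x y (ctr i) h0 hx1 hy1 (hz i) hi2 hi1 hx2 hy2 hlt

theorem stmt6 :
    ∃ c : ℕ, 0 < c ∧
      ∀ (I : Type) [Fintype I] (ctr : I → E2), Function.Injective ctr →
        ∀ k : ℕ, ∀ z : E2, (∀ i : I, z ≠ ctr i) →
          {x : E2 | x ∈ Metric.sphere z 1 ∧
              (∃ i : I, x ∈ frontier (Metric.closedBall (ctr i) 1)) ∧
              level (fun i => Metric.closedBall (ctr i) 1) x ≤ k}.encard
            ≤ ((c * (k + 1) : ℕ) : ℕ∞) := by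
  refine ⟨4, by norm_num, ?_⟩
  intro I _ ctr _ k z hz
  classical
  simp only [frontier_closedBall _ (one_ne_zero : (1 : ℝ) ≠ 0)]
  set S := {x : E2 | x ∈ Metric.sphere z 1 ∧ (∃ i : I, x ∈ Metric.sphere (ctr i) 1) ∧
              level (fun i => Metric.closedBall (ctr i) 1) x ≤ k} with hS
  rcases S.eq_empty_or_nonempty with h | ⟨x0, hx0, -, hx0l⟩
  · rw [h]; simp
  let B : Finset I := Finset.univ.filter (fun i => x0 ∉ Metric.closedBall (ctr i) 1)
  have hB : B.card ≤ k := by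
    unfold level at hx0l
    rw [← Set.ncard_coe_finset]
    simpa [B] using hx0l
  let U : Set E2 := ⋃ i ∈ B, (Metric.sphere z 1 ∩ Metric.sphere (ctr i) 1)
  have hU : U.encard ≤ ((2 * k : ℕ) : ℕ∞) := by
    have : ∀ B : Finset I, (⋃ i ∈ B, (Metric.sphere z 1 ∩ Metric.sphere (ctr i) 1)).encard
        ≤ ((2 * B.card : ℕ) : ℕ∞) := by
      intro B
      induction B using Finset.induction_on with
      | empty => simp
      | insert a s ha ih =>
        rw [Finset.set_biUnion_insert, Finset.card_insert_of_notMem ha]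
        refine (Set.encard_union_le _ _).trans ?_
        refine (add_le_add (aux_two z (ctr a) (hz a)) ih).trans ?_
        apply le_of_eq
        push_cast
        ring
    refine (this B).trans ?_
    exact_mod_cast Nat.mul_le_mul_left 2 hB
  have hR := aux_side 1 (by norm_num) ctr k z x0 hz hx0
  have hL := aux_side (-1) (by norm_num) ctr k z x0 hz hx0
  set R := {x : E2 | x ∈ Metric.sphere z 1 ∧ 0 < sdet 1 z x0 x ∧
      (∃ i, x ∈ Metric.sphere (ctr i) 1 ∧ x0 ∈ Metric.closedBall (ctr i) 1) ∧
      level (fun i => Metric.closedBall (ctr i) 1) x ≤ k} with hRd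
  set L := {x : E2 | x ∈ Metric.sphere z 1 ∧ 0 < sdet (-1) z x0 x ∧
      (∃ i, x ∈ Metric.sphere (ctr i) 1 ∧ x0 ∈ Metric.closedBall (ctr i) 1) ∧
      level (fun i => Metric.closedBall (ctr i) 1) x ≤ k} with hLd
  have hsub : S ⊆ (U ∪ (R ∪ L)) ∪ {x0} := by
    rintro x ⟨hx, ⟨i, hi⟩, hl⟩
    by_cases hb : x0 ∈ Metric.closedBall (ctr i) 1
    · rcases lt_trichotomy (sdet 1 z x0 x) 0 with h | h | h
      · left; right; right
        refine ⟨hx, ?_, ⟨i, hi, hb⟩, hl⟩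
        unfold sdet at h ⊢
        linarith
      · right
        have q := aux_sumsq 1 (by norm_num) z x0 x hx0 hx
        have q0 : sdot z x0 x0 = 1 := by
          have := (aux_sph _ _).1 hx0
          unfold sdot
          linarith
        have q0' : sdet 1 z x0 x0 = 0 := by unfold sdet; ring
        rw [h] at q
        have : sdot z x0 x = 1 ∨ sdot z x0 x = -1 := by
          exact (sq_eq_sq_iff_eq_or_eq_neg.1 (by linarith))
        rcases this with h1 | h1
        · exact aux_ext 1 (by norm_num) z x0 x x0 hx0 (by rw [h1, q0]) (by rw [h, q0'])
        · exfalso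
          exact aux_anti z x0 x (ctr i) hx0 hx (hz i) hb hi h1
      · left; right; left
        exact ⟨hx, h, ⟨i, hi, hb⟩, hl⟩
    · left; left
      simp only [U, Set.mem_iUnion]
      exact ⟨i, by simpa [B] using hb, hx, hi⟩
  refine (Set.encard_le_encard hsub).trans ?_
  refine (Set.encard_union_le _ _).trans ?_
  have h1 := (Set.encard_union_le U (R ∪ L)).trans
    (add_le_add hU ((Set.encard_union_le R L).trans (add_le_add hR hL)))
  refine (add_le_add h1 (Set.encard_singleton x0).le).trans ?_
  norm_cast
  omega
end
end

section
/- Let P be a finite set of points in ℝ² and let k be a natural number. Define r*(P,k) = inf{r ≥ 0 : ∃ c₁, c₂ ∈ ℝ² with |P \ (B(c₁,r) ∪ B(c₂,r))| ≤ k}, the optimal radius of a (2,k)-center of P. Then r*(P,k) = min over all subsets A ⊆ P and all integers 0 ≤ t ≤ k of max{rᵗ(A), r^{k−t}(P \ A)}; in particular this infimum is attained. -/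
noncomputable section

/-- rad(Y): the radius of the smallest closed disk containing Y. -/
def rad (Y : Set E2) : ℝ :=
  sInf {r : ℝ | 0 ≤ r ∧ ∃ c : E2, Y ⊆ Metric.closedBall c r}

/-- rᵗ(X): the minimum radius of a closed disk containing all but at most t points of X. -/
def rT (t : ℕ) (X : Finset E2) : ℝ :=
  sInf {ρ : ℝ | ∃ Y : Finset E2, Y ⊆ X ∧ ((X : Set E2) \ (Y : Set E2)).ncard ≤ t ∧
    ρ = rad (Y : Set E2)}


/-- r*(P,k): the optimal radius of a (2,k)-center of P. -/
def rstar (P : Finset E2) (k : ℕ) : ℝ :=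
  sInf {r : ℝ | 0 ≤ r ∧ ∃ c₁ c₂ : E2,
    ((P : Set E2) \ (Metric.closedBall c₁ r ∪ Metric.closedBall c₂ r)).ncard ≤ k}

theorem aux_rad_nonneg (Y : Set E2) : 0 ≤ rad Y :=
  Real.sInf_nonneg (fun _ h => h.1)

theorem aux_rad_le {Y : Set E2} {r : ℝ} (hr : 0 ≤ r) (c : E2)
    (h : Y ⊆ Metric.closedBall c r) : rad Y ≤ r :=
  csInf_le ⟨0, fun _ h => h.1⟩ ⟨hr, c, h⟩

theorem aux_rT_le {t : ℕ} {X Y : Finset E2} (hY : Y ⊆ X)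
    (h : ((X : Set E2) \ (Y : Set E2)).ncard ≤ t) : rT t X ≤ rad (Y : Set E2) := by
  refine csInf_le ⟨0, ?_⟩ ⟨Y, hY, h, rfl⟩
  rintro _ ⟨Y, -, -, rfl⟩
  exact aux_rad_nonneg _

theorem aux_lt {t : ℕ} {X : Finset E2} {s : ℝ} (h : rT t X < s) :
    0 ≤ s ∧ ∃ c : E2, ((X : Set E2) \ Metric.closedBall c s).ncard ≤ t := by
  obtain ⟨_, ⟨Y, hY, hc, rfl⟩, hs⟩ :=
    exists_lt_of_csInf_lt (s := {ρ : ℝ | ∃ Y : Finset E2, Y ⊆ X ∧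
      ((X : Set E2) \ (Y : Set E2)).ncard ≤ t ∧ ρ = rad (Y : Set E2)})
      ⟨rad (X : Set E2), X, subset_rfl, by simp, rfl⟩ h
  have hne : {r : ℝ | 0 ≤ r ∧ ∃ c : E2, (Y : Set E2) ⊆ Metric.closedBall c r}.Nonempty := by
    obtain ⟨r, hr⟩ := (Y.finite_toSet.isBounded).subset_closedBall (0 : E2)
    exact ⟨max r 0, le_max_right _ _, 0,
      hr.trans (Metric.closedBall_subset_closedBall (le_max_left _ _))⟩
  obtain ⟨r, ⟨hr0, c, hr⟩, hrs⟩ := exists_lt_of_csInf_lt hne hs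
  refine ⟨hr0.trans hrs.le, c, le_trans (Set.ncard_le_ncard ?_ (X.finite_toSet.sdiff)) hc⟩
  exact Set.sdiff_subset_sdiff_right
    (hr.trans (Metric.closedBall_subset_closedBall hrs.le))

open scoped Classical in
theorem aux_feas (P A : Finset E2) (k t : ℕ) (ht : t ≤ k) (s : ℝ)
    (h : max (rT t A) (rT (k - t) (P \ A)) < s) :
    0 ≤ s ∧ ∃ c₁ c₂ : E2,
    ((P : Set E2) \ (Metric.closedBall c₁ s ∪ Metric.closedBall c₂ s)).ncard ≤ k := by
  obtain ⟨h0, c₁, h1⟩ := aux_lt (lt_of_le_of_lt (le_max_left _ _) h)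
  obtain ⟨-, c₂, h2⟩ := aux_lt (lt_of_le_of_lt (le_max_right _ _) h)
  refine ⟨h0, c₁, c₂, ?_⟩
  have hsub : (P : Set E2) \ (Metric.closedBall c₁ s ∪ Metric.closedBall c₂ s) ⊆
      ((A : Set E2) \ Metric.closedBall c₁ s) ∪
        (((P \ A : Finset E2) : Set E2) \ Metric.closedBall c₂ s) := by
    intro x hx
    simp only [Set.mem_sdiff, Set.mem_union, Finset.mem_coe, Finset.mem_sdiff] at hx ⊢
    tauto
  have := Set.ncard_le_ncard hsub ((A.finite_toSet.sdiff).union ((P \ A).finite_toSet.sdiff))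
  have := Set.ncard_union_le ((A : Set E2) \ Metric.closedBall c₁ s)
        (((P \ A : Finset E2) : Set E2) \ Metric.closedBall c₂ s)
  omega

open scoped Classical in
theorem aux_conv (P : Finset E2) (k : ℕ) (r : ℝ) (hr : 0 ≤ r) (c₁ c₂ : E2)
    (h : ((P : Set E2) \ (Metric.closedBall c₁ r ∪ Metric.closedBall c₂ r)).ncard ≤ k) :
    ∃ A : Finset E2, A ⊆ P ∧ max (rT 0 A) (rT k (P \ A)) ≤ r := by
  refine ⟨P.filter (· ∈ Metric.closedBall c₁ r), Finset.filter_subset _ _, max_le ?_ ?_⟩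
  · refine (aux_rT_le subset_rfl (by simp)).trans (aux_rad_le hr c₁ ?_)
    intro x hx
    exact (Finset.mem_filter.1 hx).2
  · refine (aux_rT_le (Y := (P \ P.filter (· ∈ Metric.closedBall c₁ r)).filter
      (· ∈ Metric.closedBall c₂ r)) (Finset.filter_subset _ _) ?_).trans (aux_rad_le hr c₂ ?_)
    · refine le_trans (Set.ncard_le_ncard ?_ (P.finite_toSet.sdiff)) h
      intro x hx
      simp only [Set.mem_sdiff, Set.mem_union, Finset.mem_coe, Finset.mem_sdiff,
        Finset.mem_filter] at hx ⊢
      tauto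
    · intro x hx
      exact (Finset.mem_filter.1 hx).2

open scoped Classical in
theorem stmt11 (P : Finset E2) (k : ℕ) :
    (∃ A : Finset E2, A ⊆ P ∧ ∃ t : ℕ, t ≤ k ∧
        rstar P k = max (rT t A) (rT (k - t) (P \ A))) ∧
    (∀ A : Finset E2, A ⊆ P → ∀ t : ℕ, t ≤ k →
        rstar P k ≤ max (rT t A) (rT (k - t) (P \ A))) := by
  have hlow : ∀ A : Finset E2, A ⊆ P → ∀ t : ℕ, t ≤ k →
        rstar P k ≤ max (rT t A) (rT (k - t) (P \ A)) := by
    intro A _ t ht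
    refine le_of_forall_gt_imp_ge_of_dense fun s hs => ?_
    exact csInf_le ⟨0, fun _ h => h.1⟩ (aux_feas P A k t ht s hs)
  refine ⟨?_, hlow⟩
  obtain ⟨A, hA, hmin⟩ := Finset.exists_min_image P.powerset
    (fun A => max (rT 0 A) (rT k (P \ A))) ⟨∅, by simp⟩
  rw [Finset.mem_powerset] at hA
  refine ⟨A, hA, 0, Nat.zero_le _, le_antisymm (hlow A hA 0 (Nat.zero_le _)) ?_⟩
  refine le_csInf ⟨_, aux_feas P A k 0 (Nat.zero_le _) _ (lt_add_one _)⟩ ?_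
  rintro r ⟨hr, c₁, c₂, h⟩
  obtain ⟨A', hA', h'⟩ := aux_conv P k r hr c₁ c₂ h
  exact (hmin A' (Finset.mem_powerset.2 hA')).trans h'
end
end

section
/- Let r > 0 and let c₁, c₂ ∈ ℝ² with ‖c₁ − c₂‖ ≤ r (nearly concentric disks). Then the two-dimensional Lebesgue measure of the intersection of the closed disks of radius r centered at c₁ and c₂ satisfies vol(B(c₁,r) ∩ B(c₂,r)) ≥ (2π/3 − √3/2)·r². -/
noncomputable section

open MeasureTheory

theorem lens_integral (r : ℝ) (hr : 0 < r) :
    ∫ y in (-(√3 / 2 * r))..(√3 / 2 * r), (2 * √(r ^ 2 - y ^ 2) - r)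
      = (2 * Real.pi / 3 - √3 / 2) * r ^ 2 := by
  have h3 : √3 ^ 2 = 3 := Real.sq_sqrt (by norm_num)
  have h3p : 0 < √3 := by positivity
  have hs : 0 < √3 / 2 * r := by positivity
  have hlt : √3 / 2 * r < r := by nlinarith
  have key : ∀ y ∈ Set.uIcc (-(√3 / 2 * r)) (√3 / 2 * r),
      HasDerivAt (fun y => y * √(r ^ 2 - y ^ 2) + r ^ 2 * Real.arcsin (y / r) - r * y)
        (2 * √(r ^ 2 - y ^ 2) - r) y := by
    intro y hy
    rw [Set.uIcc_of_le (by linarith)] at hy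
    obtain ⟨h1, h2⟩ := hy
    have hpos : 0 < r ^ 2 - y ^ 2 := by nlinarith
    have hq : 0 < √(r ^ 2 - y ^ 2) := Real.sqrt_pos.2 hpos
    have hqq : √(r ^ 2 - y ^ 2) ^ 2 = r ^ 2 - y ^ 2 := Real.sq_sqrt hpos.le
    have e : √(1 - (y / r) ^ 2) = √(r ^ 2 - y ^ 2) / r := by
      rw [show 1 - (y / r) ^ 2 = (r ^ 2 - y ^ 2) / r ^ 2 by field_simp,
        Real.sqrt_div hpos.le, Real.sqrt_sq hr.le]
    have d1 : HasDerivAt (fun y : ℝ => r ^ 2 - y ^ 2) (-(2 * y)) y := by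
      simpa using (hasDerivAt_pow 2 y).const_sub (r ^ 2)
    have d2 := d1.sqrt hpos.ne'
    have hn1 : y / r ≠ -1 := by
      intro h; rw [div_eq_iff hr.ne'] at h; linarith
    have hn2 : y / r ≠ 1 := by
      intro h; rw [div_eq_iff hr.ne'] at h; linarith
    have d3 : HasDerivAt (fun y : ℝ => Real.arcsin (y / r)) _ y :=
      HasDerivAt.comp (h := fun y : ℝ => y / r) (h₂ := Real.arcsin) y
        (Real.hasDerivAt_arcsin hn1 hn2) ((hasDerivAt_id y).div_const r)
    have d4 := (((hasDerivAt_id y).mul d2).add (d3.const_mul (r ^ 2))).sub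
      ((hasDerivAt_id y).const_mul r)
    refine d4.congr_deriv ?_
    rw [e]
    simp only [id]
    field_simp
    nlinarith [hqq]
  rw [intervalIntegral.integral_eq_sub_of_hasDerivAt key
    ((by fun_prop : Continuous fun y : ℝ => 2 * √(r ^ 2 - y ^ 2) - r).intervalIntegrable _ _)]
  have e1 : √(r ^ 2 - (√3 / 2 * r) ^ 2) = r / 2 := by
    rw [show r ^ 2 - (√3 / 2 * r) ^ 2 = (r / 2) ^ 2 by
      rw [mul_pow, div_pow, h3]; ring, Real.sqrt_sq (by positivity)]
  have e2 : Real.arcsin (√3 / 2) = Real.pi / 3 := by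
    rw [← Real.sin_pi_div_three]
    apply Real.arcsin_sin <;> linarith [Real.pi_pos]
  have e3 : √3 / 2 * r / r = √3 / 2 := by field_simp
  rw [neg_sq, e1, neg_div, Real.arcsin_neg, e3, e2]
  ring

theorem lens_region (r : ℝ) (hr : 0 < r) :
    (volume : Measure (ℝ × ℝ)) (regionBetween (fun y => -(√(r ^ 2 - y ^ 2) - r / 2))
      (fun y => √(r ^ 2 - y ^ 2) - r / 2) (Set.Ioc (-(√3 / 2 * r)) (√3 / 2 * r)))
    = ENNReal.ofReal ((2 * Real.pi / 3 - √3 / 2) * r ^ 2) := by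
  have h3 : √3 ^ 2 = 3 := Real.sq_sqrt (by norm_num)
  have hs : 0 < √3 / 2 * r := by positivity
  rw [Measure.volume_eq_prod, volume_regionBetween_eq_integral]
  · rw [← lens_integral r hr, intervalIntegral.integral_of_le (by linarith)]
    congr 2
    ext y
    simp only [Pi.sub_apply]
    ring
  · exact (by fun_prop : Continuous fun y : ℝ => -(√(r ^ 2 - y ^ 2) - r / 2)).integrableOn_Ioc
  · exact (by fun_prop : Continuous fun y : ℝ => √(r ^ 2 - y ^ 2) - r / 2).integrableOn_Ioc
  · exact measurableSet_Ioc
  · rintro y ⟨h1, h2⟩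
    have : r / 2 ≤ √(r ^ 2 - y ^ 2) := by
      apply Real.le_sqrt_of_sq_le
      nlinarith
    linarith

theorem exists_basis (v : E2) : ∃ b : OrthonormalBasis (Fin 2) ℝ E2, v = ‖v‖ • b 1 := by
  by_cases hv : v = 0
  · exact ⟨EuclideanSpace.basisFun _ _, by simp [hv]⟩
  · have hn : ‖v‖ ≠ 0 := norm_ne_zero_iff.2 hv
    obtain ⟨b, hb⟩ := Orthonormal.exists_orthonormalBasis_extension_of_card_eq (𝕜 := ℝ) (E := E2)
      (ι := Fin 2) (by simp) (v := fun _ => ‖v‖⁻¹ • v) (s := {1}) (by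
        constructor
        · intro i
          simp [norm_smul, hn]
        · intro i j hij
          exact absurd (Subsingleton.elim i j) hij)
    refine ⟨b, ?_⟩
    rw [hb 1 rfl, smul_smul, mul_inv_cancel₀ hn, one_smul]

theorem stmt12 (r : ℝ) (hr : 0 < r) (c₁ c₂ : E2) (h : ‖c₁ - c₂‖ ≤ r) :
    volume (Metric.closedBall c₁ r ∩ Metric.closedBall c₂ r)
      ≥ ENNReal.ofReal ((2 * Real.pi / 3 - Real.sqrt 3 / 2) * r ^ 2) := by
  obtain ⟨b, hb⟩ := exists_basis (c₂ - c₁)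
  rw [norm_sub_rev] at h
  set d := ‖c₂ - c₁‖ with hd
  have hd0 : 0 ≤ d := norm_nonneg _
  have hc2 : c₂ = c₁ + d • b 1 := by rw [← hb]; abel
  have mp : MeasurePreserving (fun p : ℝ × ℝ => (c₁ + (d / 2) • b 1) +
      b.repr.symm (WithLp.toLp 2 (MeasurableEquiv.finTwoArrow.symm p))) :=
    (measurePreserving_add_left volume (c₁ + (d / 2) • b 1)).comp
      (b.measurePreserving_repr_symm.comp ((PiLp.volume_preserving_toLp (Fin 2)).comp
        (volume_preserving_finTwoArrow ℝ).symm))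
  rw [ge_iff_le, ← lens_region r hr, ← mp.measure_preimage
    (Metric.isClosed_closedBall.inter Metric.isClosed_closedBall).measurableSet.nullMeasurableSet]
  apply measure_mono
  rintro ⟨y, x⟩ ⟨-, hx1, hx2⟩
  simp only at hx1 hx2
  have hb1 : b 1 = b.repr.symm (WithLp.toLp 2 ![0, 1]) := by
    rw [← b.repr_symm_single]
    congr 1
    ext i
    fin_cases i <;> simp
  have hv : (MeasurableEquiv.finTwoArrow.symm (y, x) : Fin 2 → ℝ) = ![y, x] := rfl
  have hnn : ∀ t : ℝ, |t| ≤ d / 2 → ‖t • b 1 + b.repr.symm (WithLp.toLp 2 ![y, x])‖ ≤ r := by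
    intro t ht
    rw [hb1, ← map_smul, ← map_add, LinearIsometryEquiv.norm_map, EuclideanSpace.norm_eq]
    apply Real.sqrt_le_iff.2 ⟨hr.le, ?_⟩
    simp only [Fin.sum_univ_two, Real.norm_eq_abs, sq_abs]
    simp
    have hq : 0 < √(r ^ 2 - y ^ 2) := by linarith
    have hqq : √(r ^ 2 - y ^ 2) ^ 2 = r ^ 2 - y ^ 2 := Real.sq_sqrt (Real.sqrt_pos.1 hq).le
    have := abs_le.1 ht
    have : (t + x) ^ 2 ≤ √(r ^ 2 - y ^ 2) ^ 2 := by
      apply sq_le_sq'  <;> linarith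
    linarith
  refine ⟨?_, ?_⟩
  · rw [mem_closedBall_iff_norm]
    beta_reduce
    rw [hv]
    have e : c₁ + (d / 2) • b 1 + b.repr.symm (WithLp.toLp 2 ![y, x]) - c₁
        = (d / 2) • b 1 + b.repr.symm (WithLp.toLp 2 ![y, x]) := by abel
    rw [e]
    exact hnn (d / 2) (by rw [abs_of_nonneg (by positivity)])
  · rw [mem_closedBall_iff_norm]
    beta_reduce
    rw [hv]
    have e : c₁ + (d / 2) • b 1 + b.repr.symm (WithLp.toLp 2 ![y, x]) - c₂
        = (-(d / 2)) • b 1 + b.repr.symm (WithLp.toLp 2 ![y, x]) := by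
      rw [hc2]
      module
    rw [e]
    exact hnn (-(d / 2)) (by rw [abs_neg, abs_of_nonneg (by positivity)])
end
end

section
/- Let 𝒮 be a nonempty finite family of axis-aligned closed unit squares [a_i, a_i+1] × [b_i, b_i+1] in ℝ². Set ℓᴸ = min_i (a_i + 1) (the right boundary of the leftmost square), ℓᴮ = min_i (b_i + 1) (the top boundary of the bottommost square), and ℓᵀ = max_i b_i (the bottom boundary of the topmost square), and assume ℓᴮ ≤ ℓᵀ. Then for every point q = (x,y) with x ≤ ℓᴸ, the point q' = (ℓᴸ, y') with y' = max(ℓᴮ, min(y, ℓᵀ)) (the point of the segment {ℓᴸ} × [ℓᴮ, ℓᵀ] closest to q) stabs every square of 𝒮 that q stabs; i.e. for every S ∈ 𝒮, if q ∈ S then q' ∈ S. -/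
noncomputable section

/-- The axis-aligned closed unit square [a, a+1] × [b, b+1] in ℝ². -/
def unitSq (a b : ℝ) : Set (ℝ × ℝ) := Set.Icc a (a + 1) ×ˢ Set.Icc b (b + 1)

theorem stmt16 {I : Type*} [Fintype I] [Nonempty I] (a b : I → ℝ)
    (lL lB lT : ℝ)
    (hlL : lL = Finset.univ.inf' Finset.univ_nonempty (fun i => a i + 1))
    (hlB : lB = Finset.univ.inf' Finset.univ_nonempty (fun i => b i + 1))
    (hlT : lT = Finset.univ.sup' Finset.univ_nonempty b)
    (hBT : lB ≤ lT)
    (q : ℝ × ℝ) (hq : q.1 ≤ lL) :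
    ∀ i : I, q ∈ unitSq (a i) (b i) → (lL, max lB (min q.2 lT)) ∈ unitSq (a i) (b i) := by
  intro i hi
  have h1 : lL ≤ a i + 1 := by
    rw [hlL]; exact Finset.inf'_le (fun i => a i + 1) (Finset.mem_univ i)
  have h2 : lB ≤ b i + 1 := by
    rw [hlB]; exact Finset.inf'_le (fun i => b i + 1) (Finset.mem_univ i)
  have h3 : b i ≤ lT := by
    rw [hlT]; exact Finset.le_sup' b (Finset.mem_univ i)
  obtain ⟨⟨h4, h5⟩, h6, h7⟩ := hi
  exact ⟨⟨h4.trans hq, h1⟩, le_max_of_le_right (le_min h6 h3),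
    max_le h2 ((min_le_left _ _).trans h7)⟩
end
end

section
/- Let P be a finite set of points in ℝ², let p ≥ 1 and k ≥ 0 be integers. Define s* = inf{s ≥ 0 : there exist c₁, …, c_p ∈ ℝ² such that all but at most k points of P lie in the union of the p axis-aligned closed squares of side length s centered at c₁, …, c_p}. Then the infimum is attained, and either s* = 0 or there exist points u, v ∈ P such that s* = |u₁ − v₁| or s* = |u₂ − v₂|; that is, the minimal side length is the difference of x-coordinates of two points of P or the difference of y-coordinates of two points of P. -/
noncomputable section

/-- The axis-aligned closed square of side length s centered at c. -/
def sqC (c : ℝ × ℝ) (s : ℝ) : Set (ℝ × ℝ) :=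
  Set.Icc (c.1 - s / 2) (c.1 + s / 2) ×ˢ Set.Icc (c.2 - s / 2) (c.2 + s / 2)

/-- s is a feasible side length: p axis-aligned closed squares of side s
can cover all but at most k points of P. -/
def feasible (P : Finset (ℝ × ℝ)) (p k : ℕ) (s : ℝ) : Prop :=
  0 ≤ s ∧ ∃ c : Fin p → ℝ × ℝ,
    ((P : Set (ℝ × ℝ)) \ ⋃ i : Fin p, sqC (c i) s).ncard ≤ k

theorem feas_key (P : Finset (ℝ × ℝ)) (p k : ℕ) (D : Finset ℝ) (h0 : (0:ℝ) ∈ D)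
    (hx : ∀ u ∈ P, ∀ v ∈ P, |u.1 - v.1| ∈ D) (hy : ∀ u ∈ P, ∀ v ∈ P, |u.2 - v.2| ∈ D)
    (s : ℝ) (hs : feasible P p k s) : ∃ t ∈ D, t ≤ s ∧ feasible P p k t := by
  classical
  obtain ⟨hs0, c, hc⟩ := hs
  have hne : (D.filter (· ≤ s)).Nonempty := ⟨0, by simp [h0, hs0]⟩
  obtain ⟨t, ht, hmax⟩ := Finset.exists_max_image _ id hne
  simp only [Finset.mem_filter, id] at ht hmax
  refine ⟨t, ht.1, ht.2, hmax 0 ⟨h0, hs0⟩, ?_⟩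
  have hex : ∀ i, ∃ d : ℝ × ℝ, ∀ q ∈ P, q ∈ sqC (c i) s → q ∈ sqC d t := by
    intro i
    by_cases hQ : (P.filter (· ∈ sqC (c i) s)).Nonempty
    · obtain ⟨a, ha, hamin⟩ := Finset.exists_min_image _ Prod.fst hQ
      obtain ⟨b, hb, hbmin⟩ := Finset.exists_min_image _ Prod.snd hQ
      simp only [Finset.mem_filter] at ha hb hamin hbmin
      refine ⟨(a.1 + t / 2, b.2 + t / 2), fun q hq hqs => ?_⟩
      have h1 := hamin q ⟨hq, hqs⟩
      have h2 := hbmin q ⟨hq, hqs⟩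
      have e1 := hx q hq a ha.1
      have e2 := hy q hq b hb.1
      rw [abs_of_nonneg (by linarith)] at e1 e2
      have ha' := ha.2
      have hb' := hb.2
      simp only [sqC, Set.mem_prod, Set.mem_Icc] at ha' hb' hqs ⊢
      have f1 := hmax _ ⟨e1, by linarith⟩
      have f2 := hmax _ ⟨e2, by linarith⟩
      refine ⟨⟨?_, ?_⟩, ?_, ?_⟩ <;> linarith
    · exact ⟨0, fun q hq hqs => absurd ⟨q, by simp [hq, hqs]⟩ hQ⟩
  choose d hd using hex
  refine ⟨d, le_trans (Set.ncard_le_ncard ?_ (P.finite_toSet.subset Set.diff_subset)) hc⟩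
  rintro q ⟨hq, hn⟩
  refine ⟨hq, fun hm => hn ?_⟩
  obtain ⟨i, hi⟩ := Set.mem_iUnion.1 hm
  exact Set.mem_iUnion.2 ⟨i, hd i q hq hi⟩

theorem feas_exists (P : Finset (ℝ × ℝ)) (p k : ℕ) (hp : 1 ≤ p) : ∃ s, feasible P p k s := by
  have hb : ∀ q ∈ P, |q.1| + |q.2| ≤ ∑ q ∈ P, (|q.1| + |q.2|) := fun q hq =>
    Finset.single_le_sum (f := fun q : ℝ × ℝ => |q.1| + |q.2|) (fun _ _ => by positivity) hq
  refine ⟨2 * ∑ q ∈ P, (|q.1| + |q.2|), by positivity, fun _ => 0, ?_⟩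
  have : ((P : Set (ℝ × ℝ)) \ ⋃ i : Fin p, sqC 0 (2 * ∑ q ∈ P, (|q.1| + |q.2|))) = ∅ := by
    rw [Set.diff_eq_empty]
    intro q hq
    refine Set.mem_iUnion.2 ⟨⟨0, hp⟩, ?_⟩
    have h := hb q hq
    have := abs_nonneg q.1
    have := abs_nonneg q.2
    have := le_abs_self q.1
    have := le_abs_self q.2
    have := neg_abs_le q.1
    have := neg_abs_le q.2
    simp only [sqC, Set.mem_prod, Set.mem_Icc, Prod.fst_zero, Prod.snd_zero]
    refine ⟨⟨?_, ?_⟩, ?_, ?_⟩ <;> linarith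
  rw [this]
  simp

theorem stmt19 (P : Finset (ℝ × ℝ)) (p k : ℕ) (hp : 1 ≤ p) :
    feasible P p k (sInf {s : ℝ | feasible P p k s}) ∧
    (sInf {s : ℝ | feasible P p k s} = 0 ∨
      ∃ u ∈ P, ∃ v ∈ P,
        sInf {s : ℝ | feasible P p k s} = |u.1 - v.1| ∨
        sInf {s : ℝ | feasible P p k s} = |u.2 - v.2|) := by
  classical
  let D : Finset ℝ := insert 0 ((P ×ˢ P).image (fun w => |w.1.1 - w.2.1|) ∪
    (P ×ˢ P).image (fun w => |w.1.2 - w.2.2|))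
  have key := feas_key P p k D (by simp [D])
    (fun u hu v hv => Finset.mem_insert_of_mem (Finset.mem_union_left _
      (Finset.mem_image.2 ⟨(u, v), Finset.mk_mem_product hu hv, rfl⟩)))
    (fun u hu v hv => Finset.mem_insert_of_mem (Finset.mem_union_right _
      (Finset.mem_image.2 ⟨(u, v), Finset.mk_mem_product hu hv, rfl⟩)))
  obtain ⟨s, hs⟩ := feas_exists P p k hp
  obtain ⟨t, htD, -, ht⟩ := key s hs
  have hne : (D.filter (fun r => feasible P p k r)).Nonempty :=
    ⟨t, Finset.mem_filter.2 ⟨htD, ht⟩⟩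
  obtain ⟨m, hm, hmin⟩ := Finset.exists_min_image _ id hne
  simp only [Finset.mem_filter, id] at hm hmin
  have hl : IsLeast {s : ℝ | feasible P p k s} m := by
    refine ⟨hm.2, fun r hr => ?_⟩
    obtain ⟨r', hD, hle, hf⟩ := key r hr
    exact (hmin r' ⟨hD, hf⟩).trans hle
  rw [hl.csInf_eq]
  refine ⟨hm.2, ?_⟩
  rcases Finset.mem_insert.1 hm.1 with h | h
  · exact Or.inl h
  · right
    rcases Finset.mem_union.1 h with h | h
    · obtain ⟨⟨u, v⟩, hw, e⟩ := Finset.mem_image.1 h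
      obtain ⟨hu, hv⟩ := Finset.mem_product.1 hw
      exact ⟨u, hu, v, hv, Or.inl e.symm⟩
    · obtain ⟨⟨u, v⟩, hw, e⟩ := Finset.mem_image.1 h
      obtain ⟨hu, hv⟩ := Finset.mem_product.1 hw
      exact ⟨u, hu, v, hv, Or.inr e.symm⟩
end
end
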